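/- Let G~ be a mixed bicyclic graph whose underlying graph is ∞(p,1,q) with p even and q odd. Then r(G~) = 2m(G) − 2κ(G) + 1 if and only if the odd cycle of G~ has even signature and the even cycle C~_p of G~ satisfies σ(C~_p) ≡ p (mod 4). -/

import Mathlib

open scoped Classical

namespace MixedPaper

universe u

/-- A mixed graph: a finite simple graph together with an orientation of a subset
of its edges.  `arc u v = true` means there is an arc from `u` to `v`. -/
structure MixedGraph (V : Type u) where
  graph : SimpleGraph V
  arc : V → V → Bool
  arc_adj : ∀ u v, arc u v → graph.Adj u v
  arc_antisymm : ∀ u v, arc u v → ¬ arc v u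

variable {V : Type u}

/-- The Hermitian adjacency matrix of a mixed graph. -/
noncomputable def MixedGraph.hMatrix [Fintype V] [DecidableEq V] (M : MixedGraph V) :
    Matrix V V ℂ := fun u v =>
  if M.arc u v then Complex.I
  else if M.arc v u then -Complex.I
  else if M.graph.Adj u v then 1 else 0

/-- The H-rank of a mixed graph: the rank of its Hermitian adjacency matrix. -/
noncomputable def MixedGraph.hRank [Fintype V] [DecidableEq V] (M : MixedGraph V) : ℕ :=
  M.hMatrix.rank

/-- The matching number of a simple graph. -/
noncomputable def matchingNumber (G : SimpleGraph V) : ℕ :=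
  sSup {k | ∃ N : G.Subgraph, N.IsMatching ∧ N.edgeSet.ncard = k}

/-- A subgraph is a cycle subgraph if it is connected and every one of its vertices
has exactly two neighbours in it. -/
def IsCycleSubgraph {G : SimpleGraph V} (C : G.Subgraph) : Prop :=
  C.Connected ∧ ∀ v ∈ C.verts, {w | C.Adj v w}.ncard = 2

/-- κ(G) : the number of even cycles of G. -/
noncomputable def evenCycleCount (G : SimpleGraph V) : ℕ :=
  {C : G.Subgraph | IsCycleSubgraph C ∧ Even C.verts.ncard}.ncard

/-- c(G) = |E(G)| - |V(G)| + ω(G), the cyclomatic number. -/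
noncomputable def cyclomatic [Fintype V] (G : SimpleGraph V) : ℤ :=
  (G.edgeSet.ncard : ℤ) - (Fintype.card V : ℤ) + (Nat.card G.ConnectedComponent : ℤ)

/-- The induced mixed subgraph on a set of vertices. -/
def MixedGraph.induce (M : MixedGraph V) (S : Set V) : MixedGraph S where
  graph := M.graph.induce S
  arc := fun a b => M.arc a.1 b.1
  arc_adj := fun a b h => M.arc_adj a.1 b.1 h
  arc_antisymm := fun a b h => M.arc_antisymm a.1 b.1 h

/-- The mixed subgraph induced by a connected component of the underlying graph. -/
def MixedGraph.comp (M : MixedGraph V) (c : M.graph.ConnectedComponent) :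
    MixedGraph c.supp := M.induce c.supp

/-- The signature |f - b| of a closed walk in a mixed graph: the absolute difference
between the numbers of forward and backward arcs along the walk. -/
def walkSignature (M : MixedGraph V) {u : V} (w : M.graph.Walk u u) : ℕ :=
  ((w.darts.countP fun d => M.arc d.toProd.1 d.toProd.2 : ℤ) -
    (w.darts.countP fun d => M.arc d.toProd.2 d.toProd.1 : ℤ)).natAbs

/-- The signature of the cycle subgraph `C` of the mixed graph `M` satisfies the
predicate `P` (expressed via a closed walk traversing `C`; the signature does not
depend on the choice of traversal). -/
def CycleSig (M : MixedGraph V) (C : M.graph.Subgraph) (P : ℕ → Prop) : Prop :=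
  ∃ (u : V) (w : M.graph.Walk u u), w.IsCycle ∧
    {v | v ∈ w.support} = C.verts ∧ {e | e ∈ w.edges} = C.edgeSet ∧
    P (walkSignature M w)

/-- `C` is a pendant cycle with unique vertex `x` of degree 3. -/
def IsPendantCycle (G : SimpleGraph V) (C : G.Subgraph) (x : V) : Prop :=
  IsCycleSubgraph C ∧ x ∈ C.verts ∧ {w | G.Adj x w}.ncard = 3 ∧
    ∀ v ∈ C.verts, v ≠ x → {w | G.Adj v w}.ncard = 2

/-- G has no pendant vertices (vertices of degree 1). -/
def NoPendantVerts (G : SimpleGraph V) : Prop := ∀ u : V, {w | G.Adj u w}.ncard ≠ 1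

/-- The (distinct) cycles of G are pairwise vertex-disjoint. -/
def CyclesVertexDisjoint (G : SimpleGraph V) : Prop :=
  ∀ C₁ C₂ : G.Subgraph, IsCycleSubgraph C₁ → IsCycleSubgraph C₂ → C₁ ≠ C₂ →
    Disjoint C₁.verts C₂.verts

/-- The (distinct) even cycles of G are pairwise vertex-disjoint. -/
def EvenCyclesVertexDisjoint (G : SimpleGraph V) : Prop :=
  ∀ C₁ C₂ : G.Subgraph, IsCycleSubgraph C₁ → IsCycleSubgraph C₂ →
    Even C₁.verts.ncard → Even C₂.verts.ncard → C₁ ≠ C₂ →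
    Disjoint C₁.verts C₂.verts

/-- One pendant `K₂` deletion step, recorded on the surviving vertex sets:
`u` is pendant in the graph induced on `S` with unique neighbour `v` there,
and both are deleted. -/
def PendantStep (G : SimpleGraph V) (S T : Set V) : Prop :=
  ∃ u v, u ∈ S ∧ v ∈ S ∧ {w | w ∈ S ∧ G.Adj u w} = {v} ∧ T = S \ {u, v}

/-- `S` is reachable from the full vertex set by a sequence of pendant K₂ deletions. -/
def PendantReaches (G : SimpleGraph V) (S : Set V) : Prop :=
  Relation.ReflTransGen (PendantStep G) Set.univ S

/-- The graph induced on `S` has no pendant vertices. -/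
def NoPendantIn (G : SimpleGraph V) (S : Set V) : Prop :=
  ∀ u ∈ S, {w | w ∈ S ∧ G.Adj u w}.ncard ≠ 1

/-- `u` lies on some even cycle of `G`. -/
def OnEvenCycle (G : SimpleGraph V) (u : V) : Prop :=
  ∃ C : G.Subgraph, IsCycleSubgraph C ∧ Even C.verts.ncard ∧ u ∈ C.verts

/-- G is the graph ∞(p,1,q): two cycles of lengths p and q sharing exactly one vertex. -/
def IsInfinityGraph (G : SimpleGraph V) (p q : ℕ) : Prop :=
  ∃ C₁ C₂ : G.Subgraph, IsCycleSubgraph C₁ ∧ IsCycleSubgraph C₂ ∧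
    C₁.verts.ncard = p ∧ C₂.verts.ncard = q ∧
    (C₁.verts ∩ C₂.verts).ncard = 1 ∧ C₁ ⊔ C₂ = ⊤

/-- G is the theta graph θ(p,l,q): three internally disjoint paths with p, l, q
vertices respectively, joining two common endvertices. -/
def IsThetaGraph (G : SimpleGraph V) (p l q : ℕ) : Prop :=
  2 ≤ p ∧ 2 ≤ l ∧ 2 ≤ q ∧ ¬(p = 2 ∧ l = 2) ∧ ¬(p = 2 ∧ q = 2) ∧ ¬(l = 2 ∧ q = 2) ∧
  ∃ (a b : V) (W₁ W₂ W₃ : G.Walk a b), W₁.IsPath ∧ W₂.IsPath ∧ W₃.IsPath ∧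
    W₁.length = p - 1 ∧ W₂.length = l - 1 ∧ W₃.length = q - 1 ∧
    (∀ v : V, v ∈ W₁.support ∨ v ∈ W₂.support ∨ v ∈ W₃.support) ∧
    (∀ e ∈ G.edgeSet, e ∈ W₁.edges ∨ e ∈ W₂.edges ∨ e ∈ W₃.edges) ∧
    {v | v ∈ W₁.support ∧ v ∈ W₂.support} = {a, b} ∧
    {v | v ∈ W₁.support ∧ v ∈ W₃.support} = {a, b} ∧
    {v | v ∈ W₂.support ∧ v ∈ W₃.support} = {a, b}

/-- Every odd cycle of `M` has signature satisfying `P`. -/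
def OddCyclesSig (M : MixedGraph V) (P : ℕ → Prop) : Prop :=
  ∀ C : M.graph.Subgraph, IsCycleSubgraph C → Odd C.verts.ncard → CycleSig M C P

/-- Every even cycle of `M`, of length `n`, has signature `s` satisfying `P n s`. -/
def EvenCyclesSig (M : MixedGraph V) (P : ℕ → ℕ → Prop) : Prop :=
  ∀ C : M.graph.Subgraph, IsCycleSubgraph C → Even C.verts.ncard →
    CycleSig M C (P C.verts.ncard)

/-- The whole mixed graph is a single cycle. -/
def IsCycleMG (M : MixedGraph V) : Prop := IsCycleSubgraph (⊤ : M.graph.Subgraph)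

/-- The family 𝔊₀. -/
def MemG0 [Fintype V] [DecidableEq V] (M : MixedGraph V) : Prop :=
  M.graph.Connected ∧ 1 ≤ cyclomatic M.graph ∧ CyclesVertexDisjoint M.graph ∧
  NoPendantVerts M.graph ∧
  ∃ (C : M.graph.Subgraph) (x : V), IsPendantCycle M.graph C x ∧ Odd C.verts.ncard ∧
    CycleSig M C Odd ∧
    ((M.induce (C.vertsᶜ ∪ {x})).hRank : ℤ) =
      2 * (matchingNumber (M.induce (C.vertsᶜ ∪ {x})).graph : ℤ) -
        2 * cyclomatic (M.induce (C.vertsᶜ ∪ {x})).graph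

/-- The family 𝔛₁ : mixed ∞(p,1,q)-graphs, p even, q odd, whose odd cycle has odd
signature and whose even cycle C̃_p satisfies σ ≡ p (mod 4). -/
def MemX1 (M : MixedGraph V) : Prop :=
  ∃ p q : ℕ, Even p ∧ Odd q ∧ IsInfinityGraph M.graph p q ∧
    OddCyclesSig M Odd ∧ EvenCyclesSig M (fun n s => s % 4 = n % 4)

/-- The family 𝔛₂ : mixed θ(p,l,q)-graphs, p even, l q odd, whose two odd cycles have odd
signatures and whose even cycle C̃_{q+l-2} satisfies q + l + σ ≡ 2 (mod 4). -/
def MemX2 (M : MixedGraph V) : Prop :=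
  ∃ p l q : ℕ, Even p ∧ Odd l ∧ Odd q ∧ IsThetaGraph M.graph p l q ∧
    OddCyclesSig M Odd ∧ EvenCyclesSig M (fun _ s => (q + l + s) % 4 = 2)

/-- The family 𝔊₂ = 𝔊₀ ∪ 𝔛₁ ∪ 𝔛₂ together with the mixed odd cycles of odd signature. -/
def MemG2 [Fintype V] [DecidableEq V] (M : MixedGraph V) : Prop :=
  MemG0 M ∨ MemX1 M ∨ MemX2 M ∨
    (IsCycleMG M ∧ Odd (Nat.card V) ∧ CycleSig M ⊤ Odd)

/-- The family 𝔜₁. -/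
def MemY1 (M : MixedGraph V) : Prop :=
  ∃ p q : ℕ, Even p ∧ Odd q ∧ IsInfinityGraph M.graph p q ∧
    OddCyclesSig M Even ∧ EvenCyclesSig M (fun n s => s % 4 = n % 4)

/-- The family 𝔜₂. -/
def MemY2 (M : MixedGraph V) : Prop :=
  ∃ p l q : ℕ, Even p ∧ Odd l ∧ Odd q ∧ IsThetaGraph M.graph p l q ∧
    OddCyclesSig M Even ∧ EvenCyclesSig M (fun _ s => (q + l + s) % 4 = 2)

/-- `M` is a disjoint union of `k` even cycles and one odd cycle with even signature. -/
def IsDisjointUnionEvenCyclesOddCycleEvenSig (M : MixedGraph V) (k : ℤ) : Prop :=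
  (∀ c : M.graph.ConnectedComponent, IsCycleMG (M.comp c)) ∧
  (({c : M.graph.ConnectedComponent | Even (Nat.card c.supp)}.ncard : ℤ) = k) ∧
  (∃! c : M.graph.ConnectedComponent, Odd (Nat.card c.supp)) ∧
  (∀ c : M.graph.ConnectedComponent, Odd (Nat.card c.supp) →
    CycleSig (M.comp c) ⊤ Even)

/-- The family 𝔉₀. -/
def MemF0 [Fintype V] [DecidableEq V] (M : MixedGraph V) : Prop :=
  M.graph.Connected ∧ 2 ≤ cyclomatic M.graph ∧ CyclesVertexDisjoint M.graph ∧
  NoPendantVerts M.graph ∧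
  (∃ (C₀ : M.graph.Subgraph) (x₀ : V), IsPendantCycle M.graph C₀ x₀ ∧ Odd C₀.verts.ncard ∧
    CycleSig M C₀ Even ∧
    ∀ C : M.graph.Subgraph, IsCycleSubgraph C → C ≠ C₀ →
      Even C.verts.ncard ∧ CycleSig M C (fun s => s % 4 = C.verts.ncard % 4)) ∧
  (∃ (Cq : M.graph.Subgraph) (x : V), IsPendantCycle M.graph Cq x ∧ Even Cq.verts.ncard ∧
    ∃ S : Set ↥(Cq.vertsᶜ ∪ {x}),
      PendantReaches (M.induce (Cq.vertsᶜ ∪ {x})).graph S ∧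
      NoPendantIn (M.induce (Cq.vertsᶜ ∪ {x})).graph S ∧
      IsDisjointUnionEvenCyclesOddCycleEvenSig
        ((M.induce (Cq.vertsᶜ ∪ {x})).induce S)
        (cyclomatic (M.induce (Cq.vertsᶜ ∪ {x})).graph))

/-- The family 𝔉₂ = 𝔉₀ ∪ 𝔜₁ ∪ 𝔜₂ together with the mixed odd cycles of even signature. -/
def MemF2 [Fintype V] [DecidableEq V] (M : MixedGraph V) : Prop :=
  MemF0 M ∨ MemY1 M ∨ MemY2 M ∨
    (IsCycleMG M ∧ Odd (Nat.card V) ∧ CycleSig M ⊤ Even)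

/-- A connected component that is either an even cycle C̃_q with σ ≡ q (mod 4),
or an isolated vertex. -/
def GoodOtherComp (M : MixedGraph V) : Prop :=
  (IsCycleMG M ∧ Even (Nat.card V) ∧
    CycleSig M ⊤ (fun s => s % 4 = (Nat.card V) % 4)) ∨
  Nat.card V = 1

/-- A fractional matching of `G`, given as a weight function on `Sym2 V` vanishing
outside the edge set. -/
def IsFracMatching [Fintype V] [DecidableEq V] (G : SimpleGraph V) (f : Sym2 V → ℝ) : Prop :=
  (∀ e ∈ G.edgeSet, 0 ≤ f e ∧ f e ≤ 1) ∧ (∀ e, e ∉ G.edgeSet → f e = 0) ∧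
    ∀ v : V, ∑ e ∈ Finset.univ.filter (fun e : Sym2 V => v ∈ e), f e ≤ 1

/-- The fractional matching number m*(G). -/
noncomputable def fracMatchingNumber [Fintype V] [DecidableEq V] (G : SimpleGraph V) : ℝ :=
  sSup {x : ℝ | ∃ f : Sym2 V → ℝ, IsFracMatching G f ∧ ∑ e : Sym2 V, f e = x}

/-- Membership in the family ℱ : fractional matchings of total weight m*(G) taking
values in {0, 1/2, 1}. -/
def InOptFamily [Fintype V] [DecidableEq V] (G : SimpleGraph V) (f : Sym2 V → ℝ) : Prop :=
  IsFracMatching G f ∧ (∑ e : Sym2 V, f e) = fracMatchingNumber G ∧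
    ∀ e : Sym2 V, f e = 0 ∨ f e = 1 / 2 ∨ f e = 1

/-- An optimal fractional matching: a member of ℱ with the largest number of
edges of weight 1. -/
def IsOptFracMatching [Fintype V] [DecidableEq V] (G : SimpleGraph V) (f : Sym2 V → ℝ) : Prop :=
  InOptFamily G f ∧
    ∀ g : Sym2 V → ℝ, InOptFamily G g →
      {e : Sym2 V | g e = 1}.ncard ≤ {e : Sym2 V | f e = 1}.ncard

/-- E₁(C) : the edges of `G` with exactly one endpoint on the cycle `C`. -/
def cutEdges (G : SimpleGraph V) (C : G.Subgraph) : Set (Sym2 V) :=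
  {e | e ∈ G.edgeSet ∧ ∃ a b : V, e = s(a, b) ∧ a ∈ C.verts ∧ b ∉ C.verts}

/-!
Multiplying a vector by the partial products of the matrix entries along a cycle turns the kernel
equation at every vertex other than the common one into `z i + z (i + 2) = 0`. Hence a kernel
vector is determined by its value `s` at the common vertex and its rescaled values `t`, `u` at the
first vertex of each cycle. Closing up the two cycles and the equation at the common vertex impose
three linear conditions on `(s, t, u)`; if the even cycle has length `2m` and gain `W₁` and the odd
cycle has gain `W₂`, the solution space is a line exactly when `W₁ = (-1) ^ m` and
`W₂ + W₂⁻¹ ≠ 0`. The gains are powers of `I` whose exponents are, up to sign, the signatures, so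
these are the two signature conditions. Since the graph has a perfect matching and exactly one even
cycle, the rank condition says that the nullity is one.
-/

section AlternatingSequences

/-- The sequence `s, t, -s, -t, s, …`: the solution of `z i + z (i + 2) = 0` with initial values
`s` and `t`. -/
def altSeq {R : Type*} [Neg R] (s t : R) : ℕ → R
  | 0 => s
  | 1 => t
  | i + 2 => -altSeq s t i

variable {R : Type*} [Ring R]

lemma altSeq_even (s t : R) : ∀ m, altSeq s t (2 * m) = (-1) ^ m * s
  | 0 => by simp [altSeq]
  | m + 1 => by rw [Nat.mul_succ, altSeq, altSeq_even s t m, pow_succ']; simp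

lemma altSeq_odd (s t : R) : ∀ m, altSeq s t (2 * m + 1) = (-1) ^ m * t
  | 0 => by simp [altSeq]
  | m + 1 => by
    rw [Nat.mul_succ, Nat.add_right_comm, altSeq, altSeq_odd s t m, pow_succ']; simp

lemma altSeq_add_altSeq_add_two (s t : R) (i : ℕ) : altSeq s t i + altSeq s t (i + 2) = 0 :=
  add_neg_cancel _

lemma eq_altSeq {z : ℕ → R} {n : ℕ} (hz : ∀ i, i + 1 < n → z i + z (i + 2) = 0) :
    ∀ i ≤ n, z i = altSeq (z 0) (z 1) i
  | 0, _ => rfl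
  | 1, _ => rfl
  | i + 2, hi => by
    rw [altSeq, ← eq_altSeq hz i (by omega)]
    exact (neg_eq_of_add_eq_zero_right (hz i (by omega))).symm

end AlternatingSequences

section PowersOfI

lemma I_zpow_eq_neg_one_pow_iff (z : ℤ) (a : ℕ) :
    Complex.I ^ z = (-1) ^ a ↔ z ≡ 2 * a [ZMOD 4] := by
  have neg_one_pow : (-1 : ℂ) ^ a = Complex.I ^ (2 * a : ℤ) := by
    rw [zpow_mul, zpow_ofNat, Complex.I_sq, zpow_natCast]
  rw [neg_one_pow, ← div_eq_one_iff_eq (zpow_ne_zero _ Complex.I_ne_zero),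
    ← zpow_sub₀ Complex.I_ne_zero, Complex.isPrimitiveRoot_I.zpow_eq_one_iff_dvd,
    Int.modEq_comm, Int.modEq_iff_dvd, Nat.cast_ofNat]

lemma I_zpow_add_inv_ne_zero_iff (z : ℤ) :
    Complex.I ^ z + (Complex.I ^ z)⁻¹ ≠ 0 ↔ Even z := by
  have hI : Complex.I ^ z ≠ 0 := zpow_ne_zero _ Complex.I_ne_zero
  have sum_eq_zero_iff : Complex.I ^ z + (Complex.I ^ z)⁻¹ = 0 ↔
      Complex.I ^ (2 * z) = (-1) ^ 1 := by
    rw [pow_one, mul_comm 2 z, zpow_mul, zpow_ofNat, sq, eq_neg_iff_add_eq_zero,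
      ← mul_eq_zero_iff_left hI, mul_add, mul_inv_cancel₀ hI]
  rw [ne_eq, sum_eq_zero_iff, I_zpow_eq_neg_one_pow_iff, Int.even_iff, Int.ModEq]
  omega

end PowersOfI

section LinearSystem

variable {𝕜 : Type*} [Field 𝕜]

lemma finrank_linearSystem_eq_one_iff {a b c d : 𝕜} (had : a = 0 ↔ d = 0)
    (K : Submodule 𝕜 (𝕜 × 𝕜 × 𝕜))
    (hK : ∀ s t u, (s, t, u) ∈ K ↔ a * s = 0 ∧ u = b * s ∧ d * t + c * s = 0) :
    Module.finrank 𝕜 K = 1 ↔ a = 0 ∧ c ≠ 0 := by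
  rcases eq_or_ne a 0 with rfl | ha
  · obtain rfl : d = 0 := had.1 rfl
    rcases eq_or_ne c 0 with rfl | hc
    · have independent : LinearIndependent 𝕜 ![(⟨(1, 0, b), by simp [hK]⟩ : K),
          ⟨(0, 1, 0), by simp [hK]⟩] := by
        refine LinearIndependent.pair_iff.2 fun r r' h => ?_
        obtain ⟨hr, hr', -⟩ : r = 0 ∧ r' = 0 ∧ (r = 0 ∨ b = 0) := by simpa [Subtype.ext_iff] using h
        exact ⟨hr, hr'⟩
      have two_le := independent.fintype_card_le_finrank
      simp only [Fintype.card_fin] at two_le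
      simp only [ne_eq, not_true_eq_false, and_false, iff_false]
      omega
    · have eq_span : K = 𝕜 ∙ ((0, 1, 0) : 𝕜 × 𝕜 × 𝕜) := by
        ext ⟨s, t, u⟩
        simp only [hK, Submodule.mem_span_singleton, Prod.smul_mk, Prod.mk.injEq, smul_eq_mul]
        constructor
        · rintro ⟨-, rfl, h⟩
          obtain rfl : s = 0 := by simpa [hc] using h
          exact ⟨t, by simp⟩
        · rintro ⟨r, rfl, rfl, rfl⟩
          simp
      rw [eq_span, finrank_span_singleton (by simp)]
      simp [hc]
  · have eq_bot : K = ⊥ := by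
      refine (Submodule.eq_bot_iff K).2 ?_
      rintro ⟨s, t, u⟩ h
      obtain ⟨hs, rfl, ht⟩ := (hK s t u).1 h
      obtain rfl : s = 0 := by simpa [ha] using hs
      obtain rfl : t = 0 := by simpa [had.not.1 ha] using ht
      simp
    rw [eq_bot, finrank_bot]
    simp [ha]

end LinearSystem

section CycleSubgraphs

variable {G : SimpleGraph V} {C D : G.Subgraph} {x : V}

open SimpleGraph Walk

lemma isCycleSubgraph_toSubgraph {w : G.Walk x x} (hw : w.IsCycle) :
    IsCycleSubgraph w.toSubgraph :=
  ⟨w.toSubgraph_connected, fun _ hv =>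
    hw.ncard_neighborSet_toSubgraph_eq_two (w.mem_verts_toSubgraph.1 hv)⟩

lemma IsCycleSubgraph.neighborSet_eq_of_le (hD : IsCycleSubgraph D) (hC : IsCycleSubgraph C)
    (h : D ≤ C) {v : V} (hv : v ∈ D.verts) : D.neighborSet v = C.neighborSet v :=
  Set.eq_of_subset_of_ncard_le (Subgraph.neighborSet_subset_of_subgraph h v)
    ((hC.2 v (h.1 hv)).trans (hD.2 v hv).symm).le
    (Set.finite_of_ncard_ne_zero (ne_of_eq_of_ne (hC.2 v (h.1 hv)) two_ne_zero))

lemma IsCycleSubgraph.eq_of_le (hD : IsCycleSubgraph D) (hC : IsCycleSubgraph C)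
    (h : D ≤ C) : D = C := by
  have closed {u v : V} (huv : C.Adj u v) (hu : u ∈ D.verts) : D.Adj u v :=
    (hD.neighborSet_eq_of_le hC h hu).ge huv
  obtain ⟨u, hu⟩ := hD.1.nonempty
  have verts_subset : C.verts ⊆ D.verts := by
    intro v hv
    by_contra hvD
    obtain ⟨w⟩ := hC.1.coe.preconnected ⟨u, h.1 hu⟩ ⟨v, hv⟩
    obtain ⟨d, -, hd, hd'⟩ := w.exists_boundary_dart (Subtype.val ⁻¹' D.verts) hu hvD
    exact hd' (closed d.adj hd).snd_mem
  exact h.antisymm ⟨verts_subset, fun _ _ huv => closed huv (verts_subset huv.fst_mem)⟩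

lemma IsCycleSubgraph.isCycles_spanningCoe (hC : IsCycleSubgraph C) : C.spanningCoe.IsCycles :=
  fun v ⟨_, hu⟩ => hC.2 v (C.edge_vert hu)

lemma IsCycleSubgraph.exists_isCycle_toSubgraph_eq [Finite V] (hC : IsCycleSubgraph C)
    (hx : x ∈ C.verts) : ∃ w : G.Walk x x, w.IsCycle ∧ w.toSubgraph = C := by
  have nonempty : (C.spanningCoe.neighborSet x).Nonempty :=
    Set.nonempty_of_ncard_ne_zero (ne_of_eq_of_ne (hC.2 x hx) two_ne_zero)
  obtain ⟨w, hw, -⟩ :=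
    hC.isCycles_spanningCoe.exists_cycle_toSubgraph_verts_eq_connectedComponentSupp
      (c := C.spanningCoe.connectedComponentMk x) rfl nonempty
  refine ⟨w.mapLe C.spanningCoe_le, hw.mapLe _, ?_⟩
  refine (isCycleSubgraph_toSubgraph (hw.mapLe _)).eq_of_le hC ?_
  rw [toSubgraph_le_iff (hw.mapLe _).not_nil, edgeSet_mapLe_eq_edgeSet,
    ← C.edgeSet_spanningCoe]
  exact fun _ he => w.edges_subset_edgeSet he

lemma exists_getVert_eq_of_isCycle {w : G.Walk x x} (hw : w.IsCycle) {v : V}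
    (hv : v ∈ w.support) : ∃ i < w.length, w.getVert i = v := by
  obtain ⟨i, rfl, hi⟩ := mem_support_iff_exists_getVert.1 hv
  rcases hi.lt_or_eq with hi | rfl
  · exact ⟨i, hi, rfl⟩
  · exact ⟨0, hw.three_le_length.trans_lt' three_pos, by simp⟩

lemma injOn_getVert_of_isCycle {w : G.Walk x x} (hw : w.IsCycle) :
    Set.InjOn w.getVert (Set.Iio w.length) :=
  hw.getVert_injOn'.mono fun _ hi => Nat.le_sub_one_of_lt hi

lemma ncard_verts_toSubgraph_of_isCycle {w : G.Walk x x} (hw : w.IsCycle) :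
    w.toSubgraph.verts.ncard = w.length := by
  have image_eq : w.toSubgraph.verts = w.getVert '' Set.Iio w.length := by
    ext v
    rw [mem_verts_toSubgraph]
    exact ⟨exists_getVert_eq_of_isCycle hw, by rintro ⟨i, -, rfl⟩; exact w.getVert_mem_support i⟩
  rw [image_eq, (injOn_getVert_of_isCycle hw).ncard_image, Set.ncard_Iio_nat]

end CycleSubgraphs

section Signature

open SimpleGraph Walk

section Reversal

variable {G : SimpleGraph V} {x : V} {w w' : G.Walk x x}

lemma eq_of_toSubgraph_eq_of_snd_eq (hw : w.IsCycle) (hw' : w'.IsCycle)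
    (h : w.toSubgraph = w'.toSubgraph) (hsnd : w.snd = w'.snd) : w = w' := by
  have length_eq : w.length = w'.length := by
    rw [← ncard_verts_toSubgraph_of_isCycle hw, h, ncard_verts_toSubgraph_of_isCycle hw']
  have getVert_eq : ∀ i ≤ w.length, w.getVert i = w'.getVert i := by
    intro i
    induction i using Nat.twoStepInduction with
    | zero => simp
    | one => exact fun _ => hsnd
    | more i ih ih' =>
      intro hi
      have neighbors := hw.neighborSet_toSubgraph_internal i.succ_ne_zero (by omega)
      rw [ih' (by omega), h, hw'.neighborSet_toSubgraph_internal i.succ_ne_zero (by omega),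
        Nat.succ_sub_one, ih (by omega)] at neighbors
      rcases Set.pair_eq_pair_iff.1 neighbors with ⟨-, h⟩ | ⟨h, h'⟩
      exacts [h.symm, h.symm.trans h'.symm]
  exact ext_getVert_le_length length_eq getVert_eq

lemma eq_or_eq_reverse_of_toSubgraph_eq (hw : w.IsCycle) (hw' : w'.IsCycle)
    (h : w.toSubgraph = w'.toSubgraph) : w = w' ∨ w = w'.reverse := by
  have snd_mem : w.snd ∈ w'.toSubgraph.neighborSet x := by
    rw [← h, hw.neighborSet_toSubgraph_endpoint]
    exact Set.mem_insert _ _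
  rw [hw'.neighborSet_toSubgraph_endpoint] at snd_mem
  rcases snd_mem with hsnd | hsnd
  · exact .inl (eq_of_toSubgraph_eq_of_snd_eq hw hw' h hsnd)
  · refine .inr (eq_of_toSubgraph_eq_of_snd_eq hw hw'.reverse ?_ ?_)
    · rw [toSubgraph_reverse, h]
    · rw [snd_reverse, hsnd]

end Reversal

variable (M : MixedGraph V)

/-- The number of forward arcs minus the number of backward arcs along a walk. -/
noncomputable def netArcs {u v : V} (w : M.graph.Walk u v) : ℤ :=
  (w.darts.countP fun d => M.arc d.fst d.snd : ℤ) - (w.darts.countP fun d => M.arc d.snd d.fst : ℤ)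

lemma natAbs_netArcs {x : V} (w : M.graph.Walk x x) : (netArcs M w).natAbs = walkSignature M w :=
  rfl

lemma netArcs_reverse {u v : V} (w : M.graph.Walk u v) : netArcs M w.reverse = -netArcs M w := by
  simp [netArcs, Function.comp_def]

lemma walkSignature_reverse {x : V} (w : M.graph.Walk x x) :
    walkSignature M w.reverse = walkSignature M w := by
  rw [← natAbs_netArcs, netArcs_reverse, Int.natAbs_neg, natAbs_netArcs]

lemma walkSignature_rotate {u x : V} (w : M.graph.Walk u u) (hx : x ∈ w.support) :
    walkSignature M (w.rotate x hx) = walkSignature M w := by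
  have perm := (w.rotate_darts x hx).perm
  simp only [walkSignature, perm.countP_eq]

variable {M}

lemma walkSignature_eq_of_toSubgraph_eq {x y : V} {w : M.graph.Walk x x} {w' : M.graph.Walk y y}
    (hw : w.IsCycle) (hw' : w'.IsCycle) (h : w.toSubgraph = w'.toSubgraph) :
    walkSignature M w = walkSignature M w' := by
  have hx : x ∈ w'.support := by
    rw [← mem_verts_toSubgraph, ← h]
    exact w.start_mem_verts_toSubgraph
  rw [← walkSignature_rotate M w' hx]
  rcases eq_or_eq_reverse_of_toSubgraph_eq hw (hw'.rotate hx)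
    (h.trans (w'.toSubgraph_rotate hx).symm) with rfl | rfl
  exacts [rfl, walkSignature_reverse M _]

lemma cycleSig_toSubgraph_iff {x : V} {w : M.graph.Walk x x} (hw : w.IsCycle) (P : ℕ → Prop) :
    CycleSig M w.toSubgraph P ↔ P (walkSignature M w) := by
  constructor
  · rintro ⟨y, w', hw', hverts, hedges, hP⟩
    have toSubgraph_eq : w'.toSubgraph = w.toSubgraph := by
      refine Subgraph.ext ((verts_toSubgraph _).trans hverts) ?_
      ext a b
      rw [← Subgraph.mem_edgeSet, ← Subgraph.mem_edgeSet, ← hedges, mem_edges_toSubgraph]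
      rfl
    rwa [← walkSignature_eq_of_toSubgraph_eq hw' hw toSubgraph_eq]
  · exact fun hP => ⟨x, w, hw, (verts_toSubgraph w).symm, (edgeSet_toSubgraph w).symm, hP⟩

end Signature

section FigureEight

open SimpleGraph Walk

variable {G : SimpleGraph V} {x : V} {w₁ w₂ : G.Walk x x}

/-- `G` is the union of the two cycles traversed by `w₁` and `w₂`, which meet in the base point
only: the graph `∞(p,1,q)` together with a traversal of each of its two cycles. -/
structure IsFigureEight (w₁ w₂ : G.Walk x x) : Prop where
  isCycle_left : w₁.IsCycle
  isCycle_right : w₂.IsCycle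
  eq_of_mem_support : ∀ v, v ∈ w₁.support → v ∈ w₂.support → v = x
  sup_eq_top : w₁.toSubgraph ⊔ w₂.toSubgraph = ⊤

lemma IsInfinityGraph.exists_isFigureEight [Finite V] {p q : ℕ} (hG : IsInfinityGraph G p q) :
    ∃ (x : V) (w₁ w₂ : G.Walk x x), IsFigureEight w₁ w₂ ∧ w₁.length = p ∧ w₂.length = q := by
  obtain ⟨C₁, C₂, hC₁, hC₂, hp, hq, hinter, hsup⟩ := hG
  obtain ⟨x, hx⟩ := Set.ncard_eq_one.1 hinter
  have hx' : x ∈ C₁.verts ∩ C₂.verts := hx.ge rfl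
  obtain ⟨w₁, hw₁, rfl⟩ := hC₁.exists_isCycle_toSubgraph_eq hx'.1
  obtain ⟨w₂, hw₂, rfl⟩ := hC₂.exists_isCycle_toSubgraph_eq hx'.2
  refine ⟨x, w₁, w₂, ⟨hw₁, hw₂, fun v h₁ h₂ => ?_, hsup⟩, ?_, ?_⟩
  · exact hx.le ⟨w₁.mem_verts_toSubgraph.2 h₁, w₂.mem_verts_toSubgraph.2 h₂⟩
  · rw [← ncard_verts_toSubgraph_of_isCycle hw₁, hp]
  · rw [← ncard_verts_toSubgraph_of_isCycle hw₂, hq]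

namespace IsFigureEight

lemma symm (h : IsFigureEight w₁ w₂) : IsFigureEight w₂ w₁ :=
  ⟨h.isCycle_right, h.isCycle_left, fun v h₂ h₁ => h.eq_of_mem_support v h₁ h₂,
    sup_comm w₁.toSubgraph w₂.toSubgraph ▸ h.sup_eq_top⟩

lemma mem_support_or (h : IsFigureEight w₁ w₂) (v : V) : v ∈ w₁.support ∨ v ∈ w₂.support := by
  have hv : v ∈ (w₁.toSubgraph ⊔ w₂.toSubgraph).verts := h.sup_eq_top ▸ Set.mem_univ v
  simpa using hv

lemma adj_iff (h : IsFigureEight w₁ w₂) (u v : V) :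
    G.Adj u v ↔ w₁.toSubgraph.Adj u v ∨ w₂.toSubgraph.Adj u v := by
  rw [← Subgraph.sup_adj, h.sup_eq_top, Subgraph.top_adj]

lemma adj_toSubgraph_left (h : IsFigureEight w₁ w₂) {u v : V} (hu : u ∈ w₁.support) (hux : u ≠ x)
    (huv : G.Adj u v) : w₁.toSubgraph.Adj u v :=
  ((h.adj_iff u v).1 huv).resolve_right fun huv₂ =>
    hux (h.eq_of_mem_support u hu (w₂.mem_verts_toSubgraph.1 huv₂.fst_mem))

lemma neighborSet_interior (h : IsFigureEight w₁ w₂) {i : ℕ} (hi : i + 1 < w₁.length) :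
    G.neighborSet (w₁.getVert (i + 1)) = {w₁.getVert i, w₁.getVert (i + 2)} := by
  have ne_center : w₁.getVert (i + 1) ≠ x :=
    (h.isCycle_left.getVert_endpoint_iff hi.le).not.2 (by omega)
  refine Eq.trans ?_ (h.isCycle_left.neighborSet_toSubgraph_internal i.succ_ne_zero hi)
  exact Set.Subset.antisymm
    (fun _ => h.adj_toSubgraph_left (w₁.getVert_mem_support _) ne_center)
    (w₁.toSubgraph.neighborSet_subset _)

lemma neighborSet_center (h : IsFigureEight w₁ w₂) :
    G.neighborSet x = {w₁.snd, w₁.penultimate} ∪ {w₂.snd, w₂.penultimate} := by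
  rw [← h.isCycle_left.neighborSet_toSubgraph_endpoint,
    ← h.isCycle_right.neighborSet_toSubgraph_endpoint]
  exact Set.ext (h.adj_iff x)

lemma disjoint_neighborSet_center (h : IsFigureEight w₁ w₂) :
    Disjoint (w₁.toSubgraph.neighborSet x) (w₂.toSubgraph.neighborSet x) :=
  Set.disjoint_left.2 fun v h₁ h₂ => h₁.ne (h.eq_of_mem_support v
    (w₁.mem_verts_toSubgraph.1 h₁.snd_mem) (w₂.mem_verts_toSubgraph.1 h₂.snd_mem)).symm

lemma toSubgraph_le_left (h : IsFigureEight w₁ w₂) {y : V} {w : G.Walk y y} (hw : w.IsCycle)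
    (avoids_center : ∀ i, 0 < i → i < w.length → w.getVert i ≠ x) (hsnd : w.snd ∈ w₁.support) :
    w.toSubgraph ≤ w₁.toSubgraph := by
  have mem_left : ∀ i, i + 1 < w.length → w.getVert (i + 1) ∈ w₁.support := by
    intro i hi
    induction i with
    | zero => exact hsnd
    | succ i ih =>
      exact w₁.mem_verts_toSubgraph.1 (h.adj_toSubgraph_left (ih (by omega))
        (avoids_center _ i.succ_pos (by omega)) (w.adj_getVert_succ (by omega))).snd_mem
  have adj_left : ∀ i < w.length, w₁.toSubgraph.Adj (w.getVert i) (w.getVert (i + 1)) := by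
    have three_le := hw.three_le_length
    rintro (_ | i) hi
    · exact (h.adj_toSubgraph_left hsnd (avoids_center 1 one_pos (by omega))
        (w.adj_getVert_succ (by omega)).symm).symm
    · exact h.adj_toSubgraph_left (mem_left i hi) (avoids_center _ i.succ_pos hi)
        (w.adj_getVert_succ hi)
  rw [toSubgraph_le_iff hw.not_nil]
  intro e he
  induction e with | _ a b
  obtain ⟨i, hab, hi⟩ := (w.toSubgraph_adj_iff).1 ((mem_edges_toSubgraph w).2 he)
  exact hab ▸ adj_left i hi

lemma eq_toSubgraph_of_isCycleSubgraph [Finite V] (h : IsFigureEight w₁ w₂) {C : G.Subgraph}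
    (hC : IsCycleSubgraph C) : C = w₁.toSubgraph ∨ C = w₂.toSubgraph := by
  obtain ⟨y, hy, base⟩ : ∃ y ∈ C.verts, x ∈ C.verts → y = x := by
    by_cases hx : x ∈ C.verts
    · exact ⟨x, hx, fun _ => rfl⟩
    · exact hC.1.nonempty.imp fun y hy => ⟨hy, fun hx' => absurd hx' hx⟩
  obtain ⟨w, hw, rfl⟩ := hC.exists_isCycle_toSubgraph_eq hy
  have avoids_center : ∀ i, 0 < i → i < w.length → w.getVert i ≠ x := by
    intro i hi hi' hix
    obtain rfl : y = x := base (w.mem_verts_toSubgraph.2 (hix ▸ w.getVert_mem_support i))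
    have := (hw.getVert_endpoint_iff hi'.le).1 hix
    omega
  exact (h.mem_support_or w.snd).imp
    (fun hsnd => hC.eq_of_le (isCycleSubgraph_toSubgraph h.isCycle_left)
      (h.toSubgraph_le_left hw avoids_center hsnd))
    (fun hsnd => hC.eq_of_le (isCycleSubgraph_toSubgraph h.isCycle_right)
      (h.symm.toSubgraph_le_left hw avoids_center hsnd))

lemma isCycleSubgraph_iff [Finite V] (h : IsFigureEight w₁ w₂) {C : G.Subgraph} :
    IsCycleSubgraph C ↔ C = w₁.toSubgraph ∨ C = w₂.toSubgraph := by
  refine ⟨h.eq_toSubgraph_of_isCycleSubgraph, ?_⟩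
  rintro (rfl | rfl)
  exacts [isCycleSubgraph_toSubgraph h.isCycle_left, isCycleSubgraph_toSubgraph h.isCycle_right]

lemma evenCycleCount_eq_one [Finite V] (h : IsFigureEight w₁ w₂) (h₁ : Even w₁.length)
    (h₂ : Odd w₂.length) : evenCycleCount G = 1 := by
  refine Set.ncard_eq_one.2 ⟨w₁.toSubgraph, Set.ext fun C => ?_⟩
  rw [Set.mem_ofPred_eq, h.isCycleSubgraph_iff, Set.mem_singleton_iff, or_and_right]
  refine ⟨?_, ?_⟩
  · rintro (⟨rfl, -⟩ | ⟨rfl, heven⟩)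
    · rfl
    · rw [ncard_verts_toSubgraph_of_isCycle h.isCycle_right] at heven
      exact absurd heven (Nat.not_even_iff_odd.2 h₂)
  · rintro rfl
    exact .inl ⟨rfl, (ncard_verts_toSubgraph_of_isCycle h.isCycle_left).symm ▸ h₁⟩

end IsFigureEight

section CycleSignatures

variable [Finite V] {M : MixedGraph V} {x : V} {w₁ w₂ : M.graph.Walk x x}

lemma IsFigureEight.oddCyclesSig_iff (h : IsFigureEight w₁ w₂) (h₁ : Even w₁.length)
    (h₂ : Odd w₂.length) (P : ℕ → Prop) : OddCyclesSig M P ↔ P (walkSignature M w₂) := by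
  simp only [OddCyclesSig, h.isCycleSubgraph_iff, forall_eq_or_imp, forall_eq,
    ncard_verts_toSubgraph_of_isCycle, h.isCycle_left, h.isCycle_right,
    cycleSig_toSubgraph_iff, h₂, Nat.not_odd_iff_even.2 h₁, false_implies, true_implies, true_and]

lemma IsFigureEight.evenCyclesSig_iff (h : IsFigureEight w₁ w₂) (h₁ : Even w₁.length)
    (h₂ : Odd w₂.length) (P : ℕ → ℕ → Prop) :
    EvenCyclesSig M P ↔ P w₁.length (walkSignature M w₁) := by
  simp only [EvenCyclesSig, h.isCycleSubgraph_iff, forall_eq_or_imp, forall_eq,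
    ncard_verts_toSubgraph_of_isCycle, h.isCycle_left, h.isCycle_right,
    cycleSig_toSubgraph_iff, h₁, Nat.not_even_iff_odd.2 h₂, false_implies, true_implies, and_true]

end CycleSignatures

end FigureEight

section PerfectMatchings

open SimpleGraph Walk

variable {G : SimpleGraph V}

lemma ncard_verts_eq_two_mul_ncard_edgeSet_of_isMatching [Finite V] {N : G.Subgraph}
    (hN : N.IsMatching) : N.verts.ncard = 2 * N.edgeSet.ncard := by
  have := Fintype.ofFinite V
  have degree_eq (v : V) : N.spanningCoe.degree v = if v ∈ N.verts then 1 else 0 := by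
    rw [Subgraph.degree_spanningCoe]
    split_ifs with hv
    · exact Subgraph.isMatching_iff_forall_degree.1 hN v hv
    · exact Subgraph.degree_of_notMem_verts hv
  have handshake := N.spanningCoe.sum_degrees_eq_twice_card_edges
  simp only [degree_eq, Finset.sum_boole, Nat.cast_id] at handshake
  rw [← N.edgeSet_spanningCoe, ← coe_edgeFinset, Set.ncard_coe_finset, ← handshake,
    ← Set.ncard_coe_finset, Finset.coe_filter_univ]
  rfl

lemma two_mul_matchingNumber_of_isPerfectMatching [Fintype V] {N : G.Subgraph}
    (hN : N.IsPerfectMatching) : 2 * matchingNumber G = Fintype.card V := by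
  have card_eq : 2 * N.edgeSet.ncard = Fintype.card V := by
    rw [← ncard_verts_eq_two_mul_ncard_edgeSet_of_isMatching hN.1, hN.2.verts_eq_univ,
      Set.ncard_univ, Nat.card_eq_fintype_card]
  have isGreatest : IsGreatest {k | ∃ N : G.Subgraph, N.IsMatching ∧ N.edgeSet.ncard = k}
      N.edgeSet.ncard := by
    refine ⟨⟨N, hN.1, rfl⟩, ?_⟩
    rintro _ ⟨N', hN', rfl⟩
    have verts_le := Set.ncard_le_card N'.verts
    rw [ncard_verts_eq_two_mul_ncard_edgeSet_of_isMatching hN', Nat.card_eq_fintype_card,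
      ← card_eq] at verts_le
    omega
  rw [matchingNumber, isGreatest.csSup_eq, card_eq]

lemma isMatching_sup_of_disjoint {N N' : G.Subgraph} (hN : N.IsMatching) (hN' : N'.IsMatching)
    (h : Disjoint N.verts N'.verts) : (N ⊔ N').IsMatching :=
  hN.sup hN' (by rwa [hN.support_eq_verts, hN'.support_eq_verts])

lemma exists_isMatching_verts_eq_support_of_isPath {u v : V} :
    ∀ w : G.Walk u v, w.IsPath → Odd w.length →
      ∃ N : G.Subgraph, N.IsMatching ∧ N.verts = {a | a ∈ w.support}
  | nil, _, hodd => by simp at hodd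
  | cons h nil, _, _ => ⟨G.subgraphOfAdj h, .subgraphOfAdj h, by ext; simp⟩
  | cons h (cons h' w), hw, hodd => by
    have hodd' : Odd w.length := by simpa [parity_simps] using hodd
    simp only [cons_isPath_iff, support_cons, List.mem_cons, not_or] at hw
    obtain ⟨⟨hw, hb⟩, -, ha⟩ := hw
    obtain ⟨N, hN, verts_eq⟩ := exists_isMatching_verts_eq_support_of_isPath w hw hodd'
    refine ⟨G.subgraphOfAdj h ⊔ N, isMatching_sup_of_disjoint (.subgraphOfAdj h) hN ?_, ?_⟩
    · simp [verts_eq, ha, hb]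
    · ext
      simp [verts_eq, or_assoc]

section CycleSupport

variable {x v : V} {w : G.Walk x x}

lemma mem_support_tail_iff_of_isCycle (hw : w.IsCycle) : v ∈ w.tail.support ↔ v ∈ w.support := by
  rw [← cons_support_tail hw.not_nil, List.mem_cons, iff_or_self]
  rintro rfl
  exact end_mem_support _

lemma mem_support_tail_dropLast_iff_of_isCycle (hw : w.IsCycle) :
    v ∈ w.tail.dropLast.support ↔ v ∈ w.support ∧ v ≠ x := by
  have tail_not_nil : ¬w.tail.Nil := by
    have := hw.three_le_length
    rw [← length_eq_zero_iff, length_tail]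
    omega
  have center_notMem : x ∉ w.tail.dropLast.support := by
    have nodup := hw.isPath_tail.support_nodup
    rw [← support_dropLast_concat tail_not_nil, ← List.concat_eq_append,
      List.nodup_concat] at nodup
    exact nodup.1
  rw [← mem_support_tail_iff_of_isCycle hw, ← support_dropLast_concat tail_not_nil,
    List.mem_append, List.mem_singleton]
  exact ⟨fun hv => ⟨.inl hv, ne_of_mem_of_not_mem hv center_notMem⟩,
    fun hv => hv.1.resolve_right hv.2⟩

end CycleSupport

lemma IsFigureEight.exists_isPerfectMatching {x : V} {w₁ w₂ : G.Walk x x}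
    (h : IsFigureEight w₁ w₂) (h₁ : Even w₁.length) (h₂ : Odd w₂.length) :
    ∃ N : G.Subgraph, N.IsPerfectMatching := by
  have length_left := length_tail_add_one h.isCycle_left.not_nil
  have length_right := length_tail_add_one h.isCycle_right.not_nil
  have three_le := h.isCycle_right.three_le_length
  obtain ⟨N₁, hN₁, verts₁⟩ := exists_isMatching_verts_eq_support_of_isPath w₁.tail
    h.isCycle_left.isPath_tail (by grind)
  obtain ⟨N₂, hN₂, verts₂⟩ := exists_isMatching_verts_eq_support_of_isPath w₂.tail.dropLast
    h.isCycle_right.isPath_tail.dropLast (by rw [length_dropLast]; grind)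
  have mem_verts₁ (v : V) : v ∈ N₁.verts ↔ v ∈ w₁.support := by
    rw [verts₁]
    exact mem_support_tail_iff_of_isCycle h.isCycle_left
  have mem_verts₂ (v : V) : v ∈ N₂.verts ↔ v ∈ w₂.support ∧ v ≠ x := by
    rw [verts₂]
    exact mem_support_tail_dropLast_iff_of_isCycle h.isCycle_right
  refine ⟨N₁ ⊔ N₂, isMatching_sup_of_disjoint hN₁ hN₂ ?_, fun v => ?_⟩
  · refine Set.disjoint_left.2 fun v hv₁ hv₂ => ?_
    rw [mem_verts₁] at hv₁
    rw [mem_verts₂] at hv₂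
    exact hv₂.2 (h.eq_of_mem_support v hv₁ hv₂.1)
  · rw [Subgraph.verts_sup, Set.mem_union, mem_verts₁, mem_verts₂]
    by_cases hv : v = x
    · exact .inl (hv ▸ w₁.start_mem_support)
    · exact (h.mem_support_or v).imp_right fun hv₂ => ⟨hv₂, hv⟩

end PerfectMatchings

section GainMatrices

open SimpleGraph Walk

variable {𝕜 : Type*} [Field 𝕜] {G : SimpleGraph V} {H : Matrix V V 𝕜} {x : V}

/-- `H` is the adjacency matrix of a gain graph over `G` with gains in `𝕜ˣ`: its nonzero entries
sit on the edges of `G`, and opposite entries are inverse to each other. -/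
structure IsGainMatrix (G : SimpleGraph V) (H : Matrix V V 𝕜) : Prop where
  mul_eq_one : ∀ {u v}, G.Adj u v → H u v * H v u = 1
  eq_zero : ∀ {u v}, ¬G.Adj u v → H u v = 0

/-- The product of the gains of the first `i` steps of the walk `w`. -/
def partialGain (H : Matrix V V 𝕜) {u v : V} (w : G.Walk u v) (i : ℕ) : 𝕜 :=
  ∏ j ∈ Finset.range i, H (w.getVert j) (w.getVert (j + 1))

/-- The gain of a walk, the product of the gains of all its steps. -/
def walkGain (H : Matrix V V 𝕜) {u v : V} (w : G.Walk u v) : 𝕜 :=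
  partialGain H w w.length

/-- The values of `y` along the walk `w`, rescaled so that the gains along `w` become `1`. -/
def gauge (H : Matrix V V 𝕜) {u v : V} (w : G.Walk u v) (y : V → 𝕜) (i : ℕ) : 𝕜 :=
  partialGain H w i * y (w.getVert i)

section Walks

variable {u v : V} (w : G.Walk u v) (y : V → 𝕜)

lemma partialGain_succ (i : ℕ) :
    partialGain H w (i + 1) = partialGain H w i * H (w.getVert i) (w.getVert (i + 1)) :=
  Finset.prod_range_succ ..

lemma gauge_zero : gauge H w y 0 = y u := by simp [gauge, partialGain]

lemma gauge_one : gauge H w y 1 = H u w.snd * y w.snd := by simp [gauge, partialGain]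

lemma gauge_length : gauge H w y w.length = walkGain H w * y v := by simp [gauge, walkGain]

lemma IsGainMatrix.partialGain_ne_zero (hH : IsGainMatrix G H) {i : ℕ} (hi : i ≤ w.length) :
    partialGain H w i ≠ 0 :=
  Finset.prod_ne_zero_iff.2 fun _ hj => left_ne_zero_of_mul_eq_one
    (hH.mul_eq_one (w.adj_getVert_succ ((Finset.mem_range.1 hj).trans_le hi)))

lemma IsGainMatrix.walkGain_ne_zero (hH : IsGainMatrix G H) : walkGain H w ≠ 0 :=
  hH.partialGain_ne_zero w le_rfl

lemma IsGainMatrix.partialGain_succ_mul (hH : IsGainMatrix G H) {i : ℕ} (hi : i < w.length) :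
    partialGain H w (i + 1) * H (w.getVert (i + 1)) (w.getVert i) = partialGain H w i := by
  rw [partialGain_succ, mul_assoc, hH.mul_eq_one (w.adj_getVert_succ hi), mul_one]

lemma IsGainMatrix.inv_walkGain_mul_gauge (hH : IsGainMatrix G H) (hw : ¬w.Nil) :
    (walkGain H w)⁻¹ * gauge H w y (w.length - 1) = H v w.penultimate * y w.penultimate := by
  have length_pos := not_nil_iff_lt_length.1 hw
  have last_step := hH.partialGain_succ_mul w (Nat.sub_one_lt_of_lt length_pos)
  rw [Nat.sub_add_cancel length_pos, getVert_length] at last_step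
  rw [gauge, ← last_step, mul_assoc, walkGain,
    inv_mul_cancel_left₀ (hH.partialGain_ne_zero w le_rfl)]

end Walks

section Rows

variable [Fintype V] (y : V → 𝕜)

lemma IsGainMatrix.mulVec_apply (hH : IsGainMatrix G H) {v : V} {s : Finset V}
    (hs : G.neighborSet v = s) : H.mulVec y v = ∑ u ∈ s, H v u * y u := by
  refine (Finset.sum_subset s.subset_univ fun u _ hu => ?_).symm
  have not_adj : ¬G.Adj v u := fun huv => hu (Finset.mem_coe.1 (hs.le huv))
  exact mul_eq_zero_of_left (hH.eq_zero not_adj) _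

namespace IsFigureEight

variable {w₁ w₂ : G.Walk x x}

lemma partialGain_mul_mulVec (h : IsFigureEight w₁ w₂) (hH : IsGainMatrix G H) {i : ℕ}
    (hi : i + 1 < w₁.length) :
    partialGain H w₁ (i + 1) * H.mulVec y (w₁.getVert (i + 1)) =
      gauge H w₁ y i + gauge H w₁ y (i + 2) := by
  have neighbors : G.neighborSet (w₁.getVert (i + 1)) =
      ({w₁.getVert i, w₁.getVert (i + 2)} : Finset V) := by
    rw [h.neighborSet_interior hi, Finset.coe_pair]
  have ne : w₁.getVert i ≠ w₁.getVert (i + 2) :=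
    h.isCycle_left.getVert_sub_one_ne_getVert_add_one hi.le
  rw [hH.mulVec_apply y neighbors, Finset.sum_pair ne, mul_add, ← mul_assoc, ← mul_assoc,
    hH.partialGain_succ_mul w₁ (by omega), ← partialGain_succ]
  rfl

lemma mulVec_center (h : IsFigureEight w₁ w₂) (hH : IsGainMatrix G H) :
    H.mulVec y x =
      (gauge H w₁ y 1 + (walkGain H w₁)⁻¹ * gauge H w₁ y (w₁.length - 1)) +
      (gauge H w₂ y 1 + (walkGain H w₂)⁻¹ * gauge H w₂ y (w₂.length - 1)) := by
  have neighbors : G.neighborSet x =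
      (({w₁.snd, w₁.penultimate} ∪ {w₂.snd, w₂.penultimate} : Finset V) : Set V) := by
    rw [h.neighborSet_center, Finset.coe_union, Finset.coe_pair, Finset.coe_pair]
  have disjoint : Disjoint ({w₁.snd, w₁.penultimate} : Finset V) {w₂.snd, w₂.penultimate} := by
    rw [← Finset.disjoint_coe, Finset.coe_pair, Finset.coe_pair,
      ← h.isCycle_left.neighborSet_toSubgraph_endpoint,
      ← h.isCycle_right.neighborSet_toSubgraph_endpoint]
    exact h.disjoint_neighborSet_center
  rw [hH.mulVec_apply y neighbors, Finset.sum_union disjoint,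
    Finset.sum_pair h.isCycle_left.snd_ne_penultimate,
    Finset.sum_pair h.isCycle_right.snd_ne_penultimate, gauge_one, gauge_one,
    hH.inv_walkGain_mul_gauge w₁ y h.isCycle_left.not_nil,
    hH.inv_walkGain_mul_gauge w₂ y h.isCycle_right.not_nil]

lemma mulVec_interior_eq_zero_iff (h : IsFigureEight w₁ w₂) (hH : IsGainMatrix G H) :
    (∀ i, i + 1 < w₁.length → H.mulVec y (w₁.getVert (i + 1)) = 0) ↔
      ∀ i ≤ w₁.length, gauge H w₁ y i = altSeq (y x) (gauge H w₁ y 1) i := by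
  constructor
  · intro hy
    rw [← gauge_zero (H := H) w₁ y]
    refine eq_altSeq fun i hi => ?_
    rw [← h.partialGain_mul_mulVec y hH hi, hy i hi, mul_zero]
  · intro hy i hi
    have product_eq_zero := h.partialGain_mul_mulVec y hH hi
    rw [hy i (by omega), hy (i + 2) (by omega), altSeq_add_altSeq_add_two] at product_eq_zero
    exact (mul_eq_zero.1 product_eq_zero).resolve_left (hH.partialGain_ne_zero w₁ hi.le)

lemma mulVec_eq_zero_iff (h : IsFigureEight w₁ w₂) (hH : IsGainMatrix G H) :
    H.mulVec y = 0 ↔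
      (∀ i ≤ w₁.length, gauge H w₁ y i = altSeq (y x) (gauge H w₁ y 1) i) ∧
      (∀ i ≤ w₂.length, gauge H w₂ y i = altSeq (y x) (gauge H w₂ y 1) i) ∧
      (gauge H w₁ y 1 + (walkGain H w₁)⁻¹ * gauge H w₁ y (w₁.length - 1)) +
        (gauge H w₂ y 1 + (walkGain H w₂)⁻¹ * gauge H w₂ y (w₂.length - 1)) = 0 := by
  rw [← h.mulVec_interior_eq_zero_iff y hH, ← h.symm.mulVec_interior_eq_zero_iff y hH,
    ← h.mulVec_center y hH]
  constructor
  · intro hy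
    simp [hy]
  · rintro ⟨left, right, center⟩
    have eq_zero_of_mem {w : G.Walk x x} (hw : w.IsCycle) {v : V} (hv : v ∈ w.support)
        (interior : ∀ i, i + 1 < w.length → H.mulVec y (w.getVert (i + 1)) = 0) :
        H.mulVec y v = 0 := by
      obtain ⟨i, hi, rfl⟩ := exists_getVert_eq_of_isCycle hw hv
      rcases i with _ | i
      exacts [w.getVert_zero.symm ▸ center, interior i hi]
    ext v
    exact (h.mem_support_or v).elim (fun hv => eq_zero_of_mem h.isCycle_left hv left)
      (fun hv => eq_zero_of_mem h.isCycle_right hv right)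

end IsFigureEight

end Rows

section Gluing

variable {α : Type*} {w w₁ w₂ : G.Walk x x} {f g : ℕ → α}

lemma exists_forall_getVert_eq_of_isCycle (hw : w.IsCycle) (hf : f w.length = f 0) :
    ∃ y : V → α, ∀ i ≤ w.length, y (w.getVert i) = f i := by
  have leftInv := (injOn_getVert_of_isCycle hw).leftInvOn_invFunOn
  have length_pos : 0 < w.length := hw.three_le_length.trans_lt' three_pos
  refine ⟨fun v => f (Function.invFunOn w.getVert (Set.Iio w.length) v), fun i hi => ?_⟩
  rcases hi.lt_or_eq with hi | rfl
  · exact congrArg f (leftInv hi)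
  · rw [hf, getVert_length]
    exact congrArg f ((congrArg _ w.getVert_zero.symm).trans (leftInv length_pos))

lemma IsFigureEight.exists_forall_getVert_eq (h : IsFigureEight w₁ w₂)
    (hf : f w₁.length = f 0) (hg : g w₂.length = g 0) (hfg : f 0 = g 0) :
    ∃ y : V → α, (∀ i ≤ w₁.length, y (w₁.getVert i) = f i) ∧
      ∀ i ≤ w₂.length, y (w₂.getVert i) = g i := by
  obtain ⟨y₁, hy₁⟩ := exists_forall_getVert_eq_of_isCycle h.isCycle_left hf
  obtain ⟨y₂, hy₂⟩ := exists_forall_getVert_eq_of_isCycle h.isCycle_right hg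
  have agree_at_center : y₁ x = y₂ x := by
    rw [← w₁.getVert_zero, hy₁ 0 (Nat.zero_le _), w₁.getVert_zero, ← w₂.getVert_zero,
      hy₂ 0 (Nat.zero_le _), hfg]
  refine ⟨fun v => if v ∈ w₁.support then y₁ v else y₂ v, fun i hi => ?_, fun i hi => ?_⟩
  · exact (if_pos (w₁.getVert_mem_support i)).trans (hy₁ i hi)
  · rw [← hy₂ i hi, ite_eq_right_iff]
    intro hi₁
    rw [h.eq_of_mem_support _ hi₁ (w₂.getVert_mem_support i), agree_at_center]

end Gluing

section Nullity

variable {w₁ w₂ : G.Walk x x}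

/-- The value of `y` at the centre of a figure eight and its rescaled values at the first vertex of
each cycle; a kernel vector is determined by these three numbers. -/
def initialValues (H : Matrix V V 𝕜) (w₁ w₂ : G.Walk x x) : (V → 𝕜) →ₗ[𝕜] 𝕜 × 𝕜 × 𝕜 :=
  (LinearMap.proj x).prod
    ((H x w₁.snd • LinearMap.proj w₁.snd).prod (H x w₂.snd • LinearMap.proj w₂.snd))

lemma initialValues_apply (y : V → 𝕜) :
    initialValues H w₁ w₂ y = (y x, gauge H w₁ y 1, gauge H w₂ y 1) := by
  simp [initialValues, gauge_one]

namespace IsFigureEight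

lemma exists_forall_gauge_eq (h : IsFigureEight w₁ w₂) (hH : IsGainMatrix G H) {f g : ℕ → 𝕜}
    (hf : f w₁.length = walkGain H w₁ * f 0) (hg : g w₂.length = walkGain H w₂ * g 0)
    (hfg : f 0 = g 0) :
    ∃ y : V → 𝕜, (∀ i ≤ w₁.length, gauge H w₁ y i = f i) ∧
      ∀ i ≤ w₂.length, gauge H w₂ y i = g i := by
  have value_zero (w : G.Walk x x) (f : ℕ → 𝕜) : (partialGain H w 0)⁻¹ * f 0 = f 0 := by
    simp [partialGain]
  have periodic {w : G.Walk x x} {f : ℕ → 𝕜} (hf : f w.length = walkGain H w * f 0) :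
      (partialGain H w w.length)⁻¹ * f w.length = (partialGain H w 0)⁻¹ * f 0 := by
    rw [value_zero, hf, ← walkGain, inv_mul_cancel_left₀ (hH.walkGain_ne_zero w)]
  obtain ⟨y, hy₁, hy₂⟩ := h.exists_forall_getVert_eq
    (f := fun i => (partialGain H w₁ i)⁻¹ * f i) (g := fun i => (partialGain H w₂ i)⁻¹ * g i)
    (periodic hf) (periodic hg) (by rw [value_zero, value_zero, hfg])
  refine ⟨y, fun i hi => ?_, fun i hi => ?_⟩
  · rw [gauge, hy₁ i hi, mul_inv_cancel_left₀ (hH.partialGain_ne_zero w₁ hi)]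
  · rw [gauge, hy₂ i hi, mul_inv_cancel_left₀ (hH.partialGain_ne_zero w₂ hi)]

variable [Fintype V]

lemma initialValues_injOn_ker (h : IsFigureEight w₁ w₂) (hH : IsGainMatrix G H) :
    Set.InjOn (initialValues H w₁ w₂) (LinearMap.ker H.mulVecLin) := by
  intro y hy z hz hyz
  rw [SetLike.mem_coe, LinearMap.mem_ker, Matrix.mulVecLin_apply,
    h.mulVec_eq_zero_iff _ hH] at hy hz
  simp only [initialValues_apply, Prod.mk.injEq] at hyz
  obtain ⟨hx, h₁, h₂⟩ := hyz
  have eq_of_mem {w : G.Walk x x} {v : V} (hv : v ∈ w.support)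
      (hw : ∀ i ≤ w.length, gauge H w y i = gauge H w z i) : y v = z v := by
    obtain ⟨i, rfl, hi⟩ := mem_support_iff_exists_getVert.1 hv
    exact mul_left_cancel₀ (hH.partialGain_ne_zero w hi) (hw i hi)
  ext v
  rcases h.mem_support_or v with hv | hv
  · exact eq_of_mem hv fun i hi => by rw [hy.1 i hi, hz.1 i hi, hx, h₁]
  · exact eq_of_mem hv fun i hi => by rw [hy.2.1 i hi, hz.2.1 i hi, hx, h₂]

lemma mem_map_initialValues_ker_iff (h : IsFigureEight w₁ w₂) (hH : IsGainMatrix G H)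
    (s t u : 𝕜) :
    (s, t, u) ∈ (LinearMap.ker H.mulVecLin).map (initialValues H w₁ w₂) ↔
      altSeq s t w₁.length = walkGain H w₁ * s ∧ altSeq s u w₂.length = walkGain H w₂ * s ∧
      (t + (walkGain H w₁)⁻¹ * altSeq s t (w₁.length - 1)) +
        (u + (walkGain H w₂)⁻¹ * altSeq s u (w₂.length - 1)) = 0 := by
  simp only [Submodule.mem_map, LinearMap.mem_ker, Matrix.mulVecLin_apply,
    h.mulVec_eq_zero_iff _ hH, initialValues_apply, Prod.mk.injEq]
  constructor
  · rintro ⟨y, ⟨left, right, center⟩, rfl, rfl, rfl⟩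
    rw [← left _ le_rfl, ← right _ le_rfl, ← left _ (Nat.sub_le _ _), ← right _ (Nat.sub_le _ _)]
    exact ⟨gauge_length w₁ y, gauge_length w₂ y, center⟩
  · rintro ⟨left, right, center⟩
    obtain ⟨y, hy₁, hy₂⟩ := h.exists_forall_gauge_eq hH (f := altSeq s t) (g := altSeq s u)
      left right rfl
    have length_pos {w : G.Walk x x} (hw : w.IsCycle) : 0 < w.length :=
      hw.three_le_length.trans_lt' three_pos
    have center_value : y x = s := (gauge_zero w₁ y).symm.trans (hy₁ 0 (Nat.zero_le _))
    have left_value : gauge H w₁ y 1 = t := hy₁ 1 (length_pos h.isCycle_left)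
    have right_value : gauge H w₂ y 1 = u := hy₂ 1 (length_pos h.isCycle_right)
    refine ⟨y, ?_, center_value, left_value, right_value⟩
    rw [hy₁ _ (Nat.sub_le _ _), hy₂ _ (Nat.sub_le _ _), center_value, left_value, right_value]
    exact ⟨hy₁, hy₂, center⟩

lemma finrank_map_initialValues_ker (h : IsFigureEight w₁ w₂) (hH : IsGainMatrix G H) :
    Module.finrank 𝕜 ((LinearMap.ker H.mulVecLin).map (initialValues H w₁ w₂)) =
      Module.finrank 𝕜 (LinearMap.ker H.mulVecLin) := by
  rw [← LinearMap.range_domRestrict]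
  exact LinearMap.finrank_range_of_inj (Set.injOn_iff_injective.1 (h.initialValues_injOn_ker hH))

lemma mem_map_initialValues_ker_iff_of_even_of_odd (h : IsFigureEight w₁ w₂)
    (hH : IsGainMatrix G H) {m n : ℕ} (h₁ : w₁.length = 2 * m) (h₂ : w₂.length = 2 * n + 1)
    (s t u : 𝕜) :
    (s, t, u) ∈ (LinearMap.ker H.mulVecLin).map (initialValues H w₁ w₂) ↔
      (walkGain H w₁ - (-1) ^ m) * s = 0 ∧ u = (-1) ^ n * walkGain H w₂ * s ∧
      (1 - (walkGain H w₁)⁻¹ * (-1) ^ m) * t +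
        (-1) ^ n * (walkGain H w₂ + (walkGain H w₂)⁻¹) * s = 0 := by
  obtain ⟨k, rfl⟩ : ∃ k, m = k + 1 :=
    Nat.exists_eq_succ_of_ne_zero (by have := h.isCycle_left.three_le_length; omega)
  have sign_mul_sign : ((-1 : 𝕜) ^ n) * (-1) ^ n = 1 := by
    rw [← mul_pow, neg_one_mul, neg_neg, one_pow]
  rw [h.mem_map_initialValues_ker_iff hH, h₁, h₂, Nat.add_sub_cancel, altSeq_odd, altSeq_even,
    altSeq_even, show 2 * (k + 1) - 1 = 2 * k + 1 by omega, altSeq_odd, sub_mul, sub_eq_zero,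
    eq_comm (a := (-1) ^ (k + 1) * s)]
  have right_iff : (-1) ^ n * u = walkGain H w₂ * s ↔ u = (-1) ^ n * walkGain H w₂ * s := by
    rw [mul_assoc, ← mul_right_inj' (left_ne_zero_of_mul_eq_one sign_mul_sign), ← mul_assoc,
      sign_mul_sign, one_mul]
  rw [right_iff]
  refine and_congr_right fun _ => and_congr_right fun hu => ?_
  rw [hu]
  ring_nf

lemma finrank_ker_eq_one_iff (h : IsFigureEight w₁ w₂) (hH : IsGainMatrix G H) {m : ℕ}
    (h₁ : w₁.length = 2 * m) (h₂ : Odd w₂.length) :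
    Module.finrank 𝕜 (LinearMap.ker H.mulVecLin) = 1 ↔
      walkGain H w₁ = (-1) ^ m ∧ walkGain H w₂ + (walkGain H w₂)⁻¹ ≠ 0 := by
  obtain ⟨n, h₂⟩ := h₂
  have gain_sub_eq_zero_iff : walkGain H w₁ - (-1) ^ m = 0 ↔
      1 - (walkGain H w₁)⁻¹ * (-1) ^ m = 0 := by
    rw [sub_eq_zero, sub_eq_zero, eq_comm (a := 1), inv_mul_eq_one₀ (hH.walkGain_ne_zero w₁)]
  have sign_ne_zero : (-1 : 𝕜) ^ n ≠ 0 := pow_ne_zero _ (neg_ne_zero.2 one_ne_zero)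
  rw [← h.finrank_map_initialValues_ker hH,
    finrank_linearSystem_eq_one_iff gain_sub_eq_zero_iff _
      (h.mem_map_initialValues_ker_iff_of_even_of_odd hH h₁ h₂),
    sub_eq_zero, mul_ne_zero_iff_left sign_ne_zero]

end IsFigureEight

end Nullity

end GainMatrices

section HermitianAdjacency

open SimpleGraph Walk

variable [Fintype V] [DecidableEq V] (M : MixedGraph V)

lemma MixedGraph.hMatrix_of_adj {u v : V} (h : M.graph.Adj u v) :
    M.hMatrix u v =
      Complex.I ^ ((if M.arc u v then 1 else 0 : ℤ) - (if M.arc v u then 1 else 0)) := by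
  have antisymm := M.arc_antisymm u v
  by_cases huv : M.arc u v <;> by_cases hvu : M.arc v u <;> simp_all [MixedGraph.hMatrix]

lemma MixedGraph.isGainMatrix_hMatrix : IsGainMatrix M.graph M.hMatrix where
  mul_eq_one h := by
    rw [M.hMatrix_of_adj h, M.hMatrix_of_adj h.symm, ← zpow_add₀ Complex.I_ne_zero,
      sub_add_sub_cancel, sub_self, zpow_zero]
  eq_zero {u v} h := by
    have no_arc : ¬M.arc u v := mt (M.arc_adj u v) h
    have no_arc' : ¬M.arc v u := fun hvu => h (M.arc_adj v u hvu).symm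
    simp [MixedGraph.hMatrix, h, no_arc, no_arc']

lemma walkGain_hMatrix {u v : V} (w : M.graph.Walk u v) :
    walkGain M.hMatrix w = Complex.I ^ netArcs M w := by
  induction w with
  | nil => simp [walkGain, partialGain, netArcs]
  | @cons a b c h w ih =>
    have step : walkGain M.hMatrix (cons h w) = walkGain M.hMatrix w * M.hMatrix a b := by
      rw [walkGain, partialGain, length_cons, Finset.prod_range_succ']
      simp only [getVert_cons_succ, getVert_zero]
      rfl
    rw [step, ih, M.hMatrix_of_adj h, ← zpow_add₀ Complex.I_ne_zero, netArcs, netArcs, darts_cons,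
      List.countP_cons, List.countP_cons]
    congr 1
    push_cast
    ring

lemma walkGain_hMatrix_eq_neg_one_pow_iff {x : V} (w : M.graph.Walk x x) (m : ℕ) :
    walkGain M.hMatrix w = (-1) ^ m ↔ walkSignature M w % 4 = 2 * m % 4 := by
  rw [walkGain_hMatrix, I_zpow_eq_neg_one_pow_iff, ← natAbs_netArcs, Int.ModEq]
  omega

lemma walkGain_hMatrix_add_inv_ne_zero_iff {x : V} (w : M.graph.Walk x x) :
    walkGain M.hMatrix w + (walkGain M.hMatrix w)⁻¹ ≠ 0 ↔ Even (walkSignature M w) := by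
  rw [walkGain_hMatrix, I_zpow_add_inv_ne_zero_iff, ← natAbs_netArcs, Int.natAbs_even]

lemma MixedGraph.hRank_add_finrank_ker :
    M.hRank + Module.finrank ℂ (LinearMap.ker M.hMatrix.mulVecLin) = Fintype.card V := by
  rw [MixedGraph.hRank, Matrix.rank, LinearMap.finrank_range_add_finrank_ker,
    Module.finrank_fintype_fun_eq_card]

variable {M}

lemma IsFigureEight.hRank_add_one_eq_card_iff {x : V} {w₁ w₂ : M.graph.Walk x x}
    (h : IsFigureEight w₁ w₂) (h₁ : Even w₁.length) (h₂ : Odd w₂.length) :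
    M.hRank + 1 = Fintype.card V ↔
      Even (walkSignature M w₂) ∧ walkSignature M w₁ % 4 = w₁.length % 4 := by
  obtain ⟨m, hm⟩ := even_iff_exists_two_mul.1 h₁
  rw [← M.hRank_add_finrank_ker, add_right_inj, eq_comm,
    h.finrank_ker_eq_one_iff M.isGainMatrix_hMatrix hm h₂, walkGain_hMatrix_eq_neg_one_pow_iff,
    walkGain_hMatrix_add_inv_ne_zero_iff, and_comm, hm]

end HermitianAdjacency

/-- Let G̃ be a mixed bicyclic graph with underlying graph
∞(p,1,q), p even, q odd. Then r(G̃) = 2m(G) − 2κ(G) + 1 iff the odd cycle of G̃ has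
even signature and the even cycle C̃_p satisfies σ(C̃_p) ≡ p (mod 4). -/
theorem infinity_hRank_eq_lower_bound_add_one_iff
    {V : Type u} [Fintype V] [DecidableEq V] (M : MixedGraph V) (p q : ℕ)
    (hp : Even p) (hq : Odd q) (hG : IsInfinityGraph M.graph p q) :
    (M.hRank : ℤ) =
        2 * (matchingNumber M.graph : ℤ) - 2 * (evenCycleCount M.graph : ℤ) + 1 ↔
      (OddCyclesSig M Even ∧ EvenCyclesSig M (fun n s => s % 4 = n % 4)) := by
  obtain ⟨x, w₁, w₂, h, rfl, rfl⟩ := hG.exists_isFigureEight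
  obtain ⟨N, hN⟩ := h.exists_isPerfectMatching hp hq
  have matching_eq := two_mul_matchingNumber_of_isPerfectMatching hN
  rw [h.oddCyclesSig_iff hp hq, h.evenCyclesSig_iff hp hq, ← h.hRank_add_one_eq_card_iff hp hq,
    h.evenCycleCount_eq_one hp hq, ← matching_eq]
  omega

end MixedPaper
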